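/- Let A, B ⊆ [m] with A ⊄ B and B ⊄ A, Δ = Δ_A ∪ Δ_B, D = Δ + wΔ ⊆ F_4^m, N = 2^{|A|} + 2^{|B|} − 2^{|A∩B|}, s = |A\B|, t = |B\A|. Then the binary subfield code C^{(2)}_{D^*} has length N² − 1, exactly 4^{|A∪B|} distinct codewords (dimension 2|A∪B| over F_2), and the multiset {wt(c^{(2)}_{D^*}(α,β)) : (α,β) ∈ F_2^m × F_2^m} is obtained from the following weight–multiplicity pairs, each multiplicity multiplied by 4^{m−|A∪B|} (coinciding weight values accumulate): weight 0, multiplicity 1; weight 2^{|A|−1}·N, multiplicity 2(2^s−1); weight 2^{|B|−1}·N, multiplicity 2(2^t−1); weight (2^{|A|−1}+2^{|B|−1})·N, multiplicity 2(2^s−1)(2^t−1); weight 2^{|B|−1}(2^{|A|+1}+2^{|B|}−2^{|A∩B|+1}), multiplicity (2^t−1)²; weight 2^{|A|−1}(2^{|A|}+2^{|B|+1}−2^{|A∩B|+1}), multiplicity (2^s−1)²; weight (2^{|A|−1}+2^{|B|−1})(2^{|A|}+2^{|B|}−2^{|A∩B|+1}), multiplicity (2^s−1)²(2^t−1)²;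 weight (1/2)N² − (1/2)(2^{|A|}−2^{|A∩B|})(2^{|B|}−2^{|A∩B|}), multiplicity 2(2^s−1)(2^t−1); weight (1/2)N² + (1/2)·2^{|A∩B|}(2^{|A|}−2^{|A∩B|}), multiplicity 2(2^s−1)(2^t−1)²; weight (1/2)N² + (1/2)·2^{|A∩B|}(2^{|B|}−2^{|A∩B|}), multiplicity 2(2^s−1)²(2^t−1); weight (1/2)N², multiplicity 4^{|A∪B|} − 4^{s+t}. -/

import Mathlib

open Finset

/-- The support of a binary vector, as a finset of coordinates. -/
def supp {m : ℕ} (v : Fin m → ZMod 2) : Finset (Fin m) :=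
  Finset.univ.filter (fun i => v i ≠ 0)

/-- The inner product of two binary vectors. -/
def dot2 {m : ℕ} (u v : Fin m → ZMod 2) : ZMod 2 := ∑ i, u i * v i

/-- The simplicial complex generated by `A`: all binary vectors with support contained in `A`. -/
def delta {m : ℕ} (A : Finset (Fin m)) : Finset (Fin m → ZMod 2) :=
  Finset.univ.filter (fun v => supp v ⊆ A)

variable {F : Type} [Field F] [Fintype F] [DecidableEq F]

/-- The embedding of `F_2 = {0,1}` into a field `F`. -/
def e2 (a : ZMod 2) : F := (a.val : F)

/-- The quaternary vector `d_1 + w·d_2` attached to a pair of binary vectors. -/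
def dvec {m : ℕ} (w : F) (p : (Fin m → ZMod 2) × (Fin m → ZMod 2)) : Fin m → F :=
  fun i => e2 (p.1 i) + w * e2 (p.2 i)

/-- The codeword `c^{(2)}_D(α,β) = (α·d_2 + β·(d_1+d_2))_{d = d_1+w·d_2 ∈ D}` of the binary
subfield code, where `π₁, π₂` extract the components of the unique representation
`g = π₁(g) + w·π₂(g)`. -/
def cw2F {m : ℕ} (D : Finset (Fin m → F)) (π₁ π₂ : F → ZMod 2)
    (α β : Fin m → ZMod 2) : {d // d ∈ D} → ZMod 2 :=
  fun d => dot2 α (fun i => π₂ (d.1 i)) + dot2 β (fun i => π₁ (d.1 i) + π₂ (d.1 i))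

/-- The Hamming weight of the codeword `c^{(2)}_D(α,β)`, counted over the index set `D`. -/
def wt2F {m : ℕ} (D : Finset (Fin m → F)) (π₁ π₂ : F → ZMod 2)
    (α β : Fin m → ZMod 2) : ℕ :=
  (D.filter (fun d =>
    dot2 α (fun i => π₂ (d i)) + dot2 β (fun i => π₁ (d i) + π₂ (d i)) ≠ 0)).card

/-!
Let `S x = ∑_{d ∈ Δ} (-1)^{x·d}`. At `d₁ + w·d₂` the codeword of `(α, β)` takes the value
`β·d₁ + (α + β)·d₂`, so its weight is `(|Δ|² - S β * S (α + β)) / 2`; since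
`(α, β) ↦ (β, α + β)` is a bijection, the weight distribution is that of
`(|Δ|² - S x * S y) / 2` with `x` and `y` independent. For a single `Δ_A` the sum `S` is `2^|A|`
times the indicator of the dual code `Δ_{Aᶜ}`, so by inclusion-exclusion `S` takes five values on
`Δ_A ∪ Δ_B`, and pairing these values yields the weight table. Multisets of weights are compared
through the sums of arbitrary functions over them.
-/

theorem two_pow_pred {n : ℕ} (hn : 0 < n) : (2 : ℚ) ^ (n - 1) = 1 / 2 * 2 ^ n := by
  rw [← pow_sub_one_mul hn.ne']
  ring

theorem card_sdiff_add_card_sdiff_le_card_union {ι : Type*} [DecidableEq ι] (A B : Finset ι) :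
    #(A \ B) + #(B \ A) ≤ #(A ∪ B) := by
  rw [← card_union_of_disjoint disjoint_sdiff_sdiff]
  exact card_le_card (union_subset_union sdiff_subset sdiff_subset)

theorem multiset_eq_of_forall_sum_map {ι R : Type*} [Semiring R] [CharZero R] {M M' : Multiset ι}
    (h : ∀ f : ι → R, (M.map f).sum = (M'.map f).sum) : M = M' := by
  classical
  ext v
  have sum_pi_single (L : Multiset ι) : (L.map (Pi.single v (1 : R))).sum = L.count v := by
    rw [Multiset.sum_map_eq_nsmul_single v fun _ hne _ ↦ Pi.single_eq_of_ne hne 1]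
    simp
  exact_mod_cast (sum_pi_single M).symm.trans ((h _).trans (sum_pi_single M'))

theorem addChar_map_sum {ι G R : Type*} [AddCommMonoid G] [CommMonoid R] (ψ : AddChar G R)
    (s : Finset ι) (f : ι → G) : ψ (∑ i ∈ s, f i) = ∏ i ∈ s, ψ (f i) :=
  map_prod ψ.toMonoidHom (fun i ↦ Multiplicative.ofAdd (f i)) s

theorem sum_comp_indicators {ι G R : Type*} [Fintype ι] [DecidableEq ι] [AddCommGroup G]
    [CommRing R] {P Q S : Finset ι} (hP : P ⊆ S) (hQ : Q ⊆ S) (p q r : G) (k : G → R) :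
    ∑ i, k ((if i ∈ P then p else 0) + (if i ∈ Q then q else 0) - (if i ∈ S then r else 0)) =
      #(P ∩ Q) * k (p + q - r) + (#P - #(P ∩ Q)) * k (p - r) + (#Q - #(P ∩ Q)) * k (q - r) +
        (#S - #P - #Q + #(P ∩ Q)) * k (-r) + (Fintype.card ι - #S) * k 0 := by
  let ind (T : Finset ι) (i : ι) : R := if i ∈ T then 1 else 0
  have sum_ind (T : Finset ι) : ∑ i, ind T i = #T := by simp [ind]
  have pointwise (i : ι) :
      k ((if i ∈ P then p else 0) + (if i ∈ Q then q else 0) - (if i ∈ S then r else 0)) =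
        ind (P ∩ Q) i * k (p + q - r) + (ind P i - ind (P ∩ Q) i) * k (p - r) +
          (ind Q i - ind (P ∩ Q) i) * k (q - r) +
          (ind S i - ind P i - ind Q i + ind (P ∩ Q) i) * k (-r) + (1 - ind S i) * k 0 := by
    have hiP : i ∈ P → i ∈ S := (hP ·)
    have hiQ : i ∈ Q → i ∈ S := (hQ ·)
    by_cases i ∈ P <;> by_cases i ∈ Q <;> by_cases i ∈ S <;> simp_all [ind]
  simp only [pointwise, sum_add_distrib, ← sum_mul, sum_sub_distrib, sum_ind]
  simp

/-- The nontrivial additive character `a ↦ (-1) ^ a` of `F_2`, with rational values. -/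
def signChar : AddChar (ZMod 2) ℚ := AddChar.zmodChar 2 (ζ := -1) (by norm_num)

theorem signChar_apply (z : ZMod 2) : signChar z = if z = 0 then 1 else -1 := by
  fin_cases z <;> rfl

theorem ite_ne_zero_eq_signChar (z : ZMod 2) :
    (if z ≠ 0 then (1 : ℚ) else 0) = 1 / 2 * (1 - signChar z) := by
  by_cases hz : z = 0 <;> norm_num [signChar_apply, hz]

theorem sum_signChar_mul (z : ZMod 2) : ∑ y, signChar (z * y) = if z = 0 then 2 else 0 :=
  calc ∑ y, signChar (z * y)
    _ = signChar (z * 0) + signChar (z * 1) := Fin.sum_univ_two _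
    _ = if z = 0 then 2 else 0 := by
      by_cases hz : z = 0 <;> norm_num [signChar_apply, hz]

section BinaryVectors

variable {m : ℕ}

theorem dot2_eq_dotProduct (x y : Fin m → ZMod 2) : dot2 x y = x ⬝ᵥ y := rfl

theorem mem_delta {S : Finset (Fin m)} {v : Fin m → ZMod 2} :
    v ∈ delta S ↔ ∀ i ∉ S, v i = 0 := by
  simp [delta, supp, subset_iff, not_imp_comm]

theorem delta_eq_piFinset (S : Finset (Fin m)) :
    delta S = Fintype.piFinset fun i ↦ if i ∈ S then univ else {0} := by
  ext v
  simp only [mem_delta, Fintype.mem_piFinset]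
  refine forall_congr' fun i ↦ ?_
  by_cases i ∈ S <;> simp [*]

theorem card_delta (S : Finset (Fin m)) : #(delta S) = 2 ^ #S := by
  simp [delta_eq_piFinset, Fintype.card_piFinset, apply_ite card]

theorem delta_mono {S T : Finset (Fin m)} (h : S ⊆ T) : delta S ⊆ delta T :=
  fun _ hv ↦ mem_delta.2 fun i hi ↦ mem_delta.1 hv i (mt (h ·) hi)

theorem delta_inter_delta (S T : Finset (Fin m)) : delta S ∩ delta T = delta (S ∩ T) := by
  ext v
  simp only [mem_inter, mem_delta]
  grind

theorem zero_mem_delta (S : Finset (Fin m)) : 0 ∈ delta S := mem_delta.2 fun _ _ ↦ rfl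

theorem single_mem_delta {S : Finset (Fin m)} {i : Fin m} (hi : i ∈ S) :
    Pi.single i 1 ∈ delta S :=
  mem_delta.2 fun _ hj ↦ Pi.single_eq_of_ne (ne_of_mem_of_not_mem hi hj).symm 1

theorem delta_union_subset (S T : Finset (Fin m)) : delta S ∪ delta T ⊆ delta (S ∪ T) :=
  union_subset (delta_mono subset_union_left) (delta_mono subset_union_right)

theorem card_delta_union_add (A B : Finset (Fin m)) :
    #(delta A ∪ delta B) + 2 ^ #(A ∩ B) = 2 ^ #A + 2 ^ #B := by
  simpa [delta_inter_delta, card_delta] using card_union_add_card_inter (delta A) (delta B)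

theorem cast_card_delta_union (A B : Finset (Fin m)) :
    (#(delta A ∪ delta B) : ℚ) = 2 ^ #A + 2 ^ #B - 2 ^ #(A ∩ B) :=
  eq_sub_of_add_eq (mod_cast card_delta_union_add A B)

theorem dot2_congr_left {S : Finset (Fin m)} {x y d : Fin m → ZMod 2} (hd : d ∈ delta S)
    (h : ∀ i ∈ S, x i = y i) : dot2 x d = dot2 y d := by
  refine sum_congr rfl fun i _ ↦ ?_
  by_cases hi : i ∈ S
  · rw [h i hi]
  · rw [mem_delta.1 hd i hi, mul_zero, mul_zero]

/-- The character sum `∑_{d ∈ Δ} (-1)^{x·d}`. -/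
def charSum (Δ : Finset (Fin m → ZMod 2)) (x : Fin m → ZMod 2) : ℚ :=
  ∑ d ∈ Δ, signChar (dot2 x d)

theorem charSum_delta (S : Finset (Fin m)) (x : Fin m → ZMod 2) :
    charSum (delta S) x = if x ∈ delta Sᶜ then 2 ^ #S else 0 :=
  calc ∑ d ∈ delta S, signChar (dot2 x d)
    _ = ∑ d ∈ delta S, ∏ i, signChar (x i * d i) := by
      simp only [dot2, addChar_map_sum]
    _ = ∏ i, ∑ y ∈ if i ∈ S then univ else {0}, signChar (x i * y) := by
      rw [delta_eq_piFinset, prod_univ_sum]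
    _ = ∏ i, if i ∈ S then (if x i = 0 then 2 else 0) else 1 := by
      refine prod_congr rfl fun i _ ↦ ?_
      by_cases i ∈ S <;> simp [*, sum_signChar_mul]
    _ = if x ∈ delta Sᶜ then 2 ^ #S else 0 := by
      simp [prod_ite_zero, mem_delta]

theorem charSum_delta_union (A B : Finset (Fin m)) (x : Fin m → ZMod 2) :
    charSum (delta A ∪ delta B) x =
      (if x ∈ delta Aᶜ then 2 ^ #A else 0) + (if x ∈ delta Bᶜ then 2 ^ #B else 0) -
        if x ∈ delta (A ∩ B)ᶜ then 2 ^ #(A ∩ B) else 0 := by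
  rw [← charSum_delta, ← charSum_delta, ← charSum_delta, ← delta_inter_delta]
  exact eq_sub_of_add_eq sum_union_inter

theorem card_delta_compl (S : Finset (Fin m)) : #(delta Sᶜ) = 2 ^ (m - #S) := by
  rw [card_delta, card_compl, Fintype.card_fin]

theorem sum_comp_charSum_delta_union {R : Type*} [CommRing R] (A B : Finset (Fin m)) (k : ℚ → R) :
    ∑ x, k (charSum (delta A ∪ delta B) x) =
      2 ^ (m - #(A ∪ B)) *
        (k #(delta A ∪ delta B) + (2 ^ #(A \ B) - 1) * k (2 ^ #B - 2 ^ #(A ∩ B)) +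
          (2 ^ #(B \ A) - 1) * k (2 ^ #A - 2 ^ #(A ∩ B)) +
          (2 ^ #(A \ B) - 1) * (2 ^ #(B \ A) - 1) * k (-2 ^ #(A ∩ B)) +
          (2 ^ #(A ∪ B) - 2 ^ (#(A \ B) + #(B \ A))) * k 0) := by
  have hA := card_sdiff_add_card_inter A B
  have hB := card_sdiff_add_card_inter B A
  have hU := card_union_add_card_inter A B
  have hm : #(A ∪ B) ≤ m := card_finset_fin_le _
  rw [inter_comm] at hB
  have exponent_A : m - #A = m - #(A ∪ B) + #(B \ A) := by lia
  have exponent_B : m - #B = m - #(A ∪ B) + #(A \ B) := by lia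
  have exponent_inter : m - #(A ∩ B) = m - #(A ∪ B) + (#(A \ B) + #(B \ A)) := by lia
  have exponent_univ : m = m - #(A ∪ B) + #(A ∪ B) := by lia
  have card_univ : (Fintype.card (Fin m → ZMod 2) : R) = 2 ^ (m - #(A ∪ B) + #(A ∪ B)) := by
    rw [← exponent_univ]
    simp
  simp only [charSum_delta_union, cast_card_delta_union]
  rw [sum_comp_indicators (delta_mono <| compl_subset_compl.2 inter_subset_left)
      (delta_mono <| compl_subset_compl.2 inter_subset_right),
    delta_inter_delta, ← compl_union, card_univ]
  simp only [card_delta_compl, exponent_A, exponent_B, exponent_inter, pow_add, Nat.cast_pow,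
    Nat.cast_mul, Nat.cast_ofNat]
  ring

theorem sum_comp_charSum_mul_charSum_delta_union {R : Type*} [CommRing R] (A B : Finset (Fin m))
    (k : ℚ → R) :
    ∑ x, ∑ y, k (charSum (delta A ∪ delta B) x * charSum (delta A ∪ delta B) y) =
      4 ^ (m - #(A ∪ B)) *
        (k (#(delta A ∪ delta B) ^ 2) +
          2 * (2 ^ #(A \ B) - 1) * k (#(delta A ∪ delta B) * (2 ^ #B - 2 ^ #(A ∩ B))) +
          2 * (2 ^ #(B \ A) - 1) * k (#(delta A ∪ delta B) * (2 ^ #A - 2 ^ #(A ∩ B))) +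
          2 * (2 ^ #(A \ B) - 1) * (2 ^ #(B \ A) - 1) *
            k (-(#(delta A ∪ delta B) * 2 ^ #(A ∩ B))) +
          (2 ^ #(B \ A) - 1) ^ 2 * k ((2 ^ #A - 2 ^ #(A ∩ B)) ^ 2) +
          (2 ^ #(A \ B) - 1) ^ 2 * k ((2 ^ #B - 2 ^ #(A ∩ B)) ^ 2) +
          (2 ^ #(A \ B) - 1) ^ 2 * (2 ^ #(B \ A) - 1) ^ 2 * k ((2 ^ #(A ∩ B)) ^ 2) +
          2 * (2 ^ #(A \ B) - 1) * (2 ^ #(B \ A) - 1) *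
            k ((2 ^ #A - 2 ^ #(A ∩ B)) * (2 ^ #B - 2 ^ #(A ∩ B))) +
          2 * (2 ^ #(A \ B) - 1) * (2 ^ #(B \ A) - 1) ^ 2 *
            k (-(2 ^ #(A ∩ B) * (2 ^ #A - 2 ^ #(A ∩ B)))) +
          2 * (2 ^ #(A \ B) - 1) ^ 2 * (2 ^ #(B \ A) - 1) *
            k (-(2 ^ #(A ∩ B) * (2 ^ #B - 2 ^ #(A ∩ B)))) +
          (4 ^ #(A ∪ B) - 4 ^ (#(A \ B) + #(B \ A))) * k 0) := by
  have four_pow (n : ℕ) : (4 : R) ^ n = (2 ^ n) ^ 2 := by rw [pow_right_comm]; norm_num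
  rw [sum_comp_charSum_delta_union A B fun x ↦
    ∑ y, k (x * charSum (delta A ∪ delta B) y)]
  simp only [fun z ↦ sum_comp_charSum_delta_union A B fun y ↦ k (z * y)]
  rw [four_pow, four_pow, four_pow]
  simp only [mul_comm _ (#(delta A ∪ delta B) : ℚ), mul_zero, zero_mul]
  generalize (#(delta A ∪ delta B) : ℚ) = N
  ring_nf

end BinaryVectors

section SubfieldCode

variable {K : Type} [Field K] {m : ℕ} {w : K} {π₁ π₂ : K → ZMod 2}

theorem dvec_zero : dvec w (0 : (Fin m → ZMod 2) × (Fin m → ZMod 2)) = 0 := by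
  ext i
  simp [dvec, e2]

variable (hπ : ∀ x y, π₁ (e2 x + w * e2 y) = x ∧ π₂ (e2 x + w * e2 y) = y)

include hπ

theorem dvec_injective : Function.Injective (dvec (m := m) w) := by
  intro p q h
  have h_apply (i : Fin m) : e2 (p.1 i) + w * e2 (p.2 i) = e2 (q.1 i) + w * e2 (q.2 i) :=
    congrFun h i
  ext i
  · rw [← (hπ (p.1 i) (p.2 i)).1, h_apply, (hπ _ _).1]
  · rw [← (hπ (p.1 i) (p.2 i)).2, h_apply, (hπ _ _).2]

theorem codeword_apply_dvec (α β : Fin m → ZMod 2)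
    (p : (Fin m → ZMod 2) × (Fin m → ZMod 2)) :
    dot2 α (fun i ↦ π₂ (dvec w p i)) + dot2 β (fun i ↦ π₁ (dvec w p i) + π₂ (dvec w p i)) =
      dot2 β p.1 + dot2 (α + β) p.2 := by
  have sum_eq : (fun i ↦ p.1 i + p.2 i) = p.1 + p.2 := rfl
  simp only [dvec, hπ, sum_eq, dot2_eq_dotProduct, dotProduct_add, add_dotProduct]
  ring

variable [DecidableEq K]

/-- The defining set `D^*` of the code, where `D = Δ + wΔ` is built from a set `Δ` of binary
vectors. -/
def puncturedSet (w : K) (Δ : Finset (Fin m → ZMod 2)) : Finset (Fin m → K) :=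
  ((Δ ×ˢ Δ).image (dvec w)).erase 0

theorem card_puncturedSet {Δ : Finset (Fin m → ZMod 2)} (h0 : 0 ∈ Δ) :
    #(puncturedSet w Δ) = #Δ ^ 2 - 1 := by
  have zero_mem : (0 : Fin m → K) ∈ (Δ ×ˢ Δ).image (dvec w) :=
    mem_image.2 ⟨0, mk_mem_product h0 h0, dvec_zero⟩
  rw [puncturedSet, card_erase_of_mem zero_mem, card_image_of_injective _ (dvec_injective hπ),
    card_product, sq]

theorem wt2F_puncturedSet (Δ : Finset (Fin m → ZMod 2)) (α β : Fin m → ZMod 2) :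
    (wt2F (puncturedSet w Δ) π₁ π₂ α β : ℚ) =
      1 / 2 * (#Δ ^ 2 - charSum Δ β * charSum Δ (α + β)) := by
  have value_zero : dot2 α (fun i ↦ π₂ ((0 : Fin m → K) i)) +
      dot2 β (fun i ↦ π₁ ((0 : Fin m → K) i) + π₂ ((0 : Fin m → K) i)) = 0 := by
    rw [← dvec_zero (w := w), codeword_apply_dvec hπ]
    simp [dot2_eq_dotProduct]
  calc (wt2F (puncturedSet w Δ) π₁ π₂ α β : ℚ)
    _ = ∑ p ∈ Δ ×ˢ Δ, if dot2 β p.1 + dot2 (α + β) p.2 ≠ 0 then (1 : ℚ) else 0 := by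
      rw [wt2F, puncturedSet, filter_erase,
        erase_eq_of_notMem (by rw [mem_filter]; exact fun h ↦ h.2 value_zero),
        natCast_card_filter, sum_image (dvec_injective hπ).injOn]
      simp only [codeword_apply_dvec hπ]
    _ = ∑ p ∈ Δ ×ˢ Δ,
        1 / 2 * (1 - signChar (dot2 β p.1) * signChar (dot2 (α + β) p.2)) := by
      simp only [ite_ne_zero_eq_signChar, AddChar.map_add_eq_mul]
    _ = 1 / 2 * (#Δ ^ 2 - charSum Δ β * charSum Δ (α + β)) := by
      rw [← mul_sum, sum_sub_distrib, charSum, charSum, sum_mul_sum, ← sum_product']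
      simp [sq]

theorem sum_comp_wt2F_puncturedSet {R : Type*} [AddCommMonoid R]
    (Δ : Finset (Fin m → ZMod 2)) (f : ℚ → R) :
    ∑ q : (Fin m → ZMod 2) × (Fin m → ZMod 2), f (wt2F (puncturedSet w Δ) π₁ π₂ q.1 q.2) =
      ∑ x, ∑ y, f (1 / 2 * (#Δ ^ 2 - charSum Δ x * charSum Δ y)) := by
  simp only [wt2F_puncturedSet hπ, Fintype.sum_prod_type_right]
  exact sum_congr rfl fun β _ ↦ Equiv.sum_comp (Equiv.addRight β) fun y ↦
    f (1 / 2 * (#Δ ^ 2 - charSum Δ β * charSum Δ y))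

theorem cw2F_puncturedSet_eq_iff {Δ : Finset (Fin m → ZMod 2)}
    {U : Finset (Fin m)} (hΔU : Δ ⊆ delta U) (h0 : 0 ∈ Δ)
    (hU : ∀ i ∈ U, Pi.single i 1 ∈ Δ) {α β α' β' : Fin m → ZMod 2} :
    cw2F (puncturedSet w Δ) π₁ π₂ α β = cw2F (puncturedSet w Δ) π₁ π₂ α' β' ↔
      ∀ i ∈ U, α i = α' i ∧ β i = β' i := by
  constructor
  · intro h i hi
    have values_eq {p : (Fin m → ZMod 2) × (Fin m → ZMod 2)} (hp : p ∈ Δ ×ˢ Δ) (hp0 : p ≠ 0) :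
        dot2 β p.1 + dot2 (α + β) p.2 = dot2 β' p.1 + dot2 (α' + β') p.2 := by
      have hmem : dvec w p ∈ puncturedSet w Δ := mem_erase.2
        ⟨dvec_zero (w := w) ▸ (dvec_injective hπ).ne hp0, mem_image_of_mem _ hp⟩
      simpa only [cw2F, codeword_apply_dvec hπ] using congrFun h ⟨_, hmem⟩
    have hβ : β i = β' i := by
      simpa [dot2_eq_dotProduct] using
        values_eq (p := (Pi.single i 1, 0)) (mk_mem_product (hU i hi) h0) (by simp)
    have hαβ : α i + β i = α' i + β' i := by
      simpa [dot2_eq_dotProduct] using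
        values_eq (p := (0, Pi.single i 1)) (mk_mem_product h0 (hU i hi)) (by simp)
    exact ⟨add_right_cancel (hβ ▸ hαβ), hβ⟩
  · refine fun h ↦ funext fun ⟨d, hd⟩ ↦ ?_
    obtain ⟨p, hp, rfl⟩ := mem_image.1 (mem_of_mem_erase hd)
    obtain ⟨hp₁, hp₂⟩ := mem_product.1 hp
    simp only [cw2F, codeword_apply_dvec hπ]
    exact congrArg₂ (· + ·) (dot2_congr_left (hΔU hp₁) fun i hi ↦ (h i hi).2)
      (dot2_congr_left (hΔU hp₂) fun i hi ↦ congrArg₂ (· + ·) (h i hi).1 (h i hi).2)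

theorem card_image_cw2F_puncturedSet {Δ : Finset (Fin m → ZMod 2)}
    {U : Finset (Fin m)} (hΔU : Δ ⊆ delta U) (h0 : 0 ∈ Δ)
    (hU : ∀ i ∈ U, Pi.single i 1 ∈ Δ) :
    #(univ.image fun q : (Fin m → ZMod 2) × (Fin m → ZMod 2) ↦
      cw2F (puncturedSet w Δ) π₁ π₂ q.1 q.2) = 4 ^ #U := by
  let cw (q : (Fin m → ZMod 2) × (Fin m → ZMod 2)) := cw2F (puncturedSet w Δ) π₁ π₂ q.1 q.2
  have cw_eq_iff {q q'} : cw q = cw q' ↔ ∀ i ∈ U, q.1 i = q'.1 i ∧ q.2 i = q'.2 i :=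
    cw2F_puncturedSet_eq_iff hπ hΔU h0 hU
  have image_eq : univ.image cw = (delta U ×ˢ delta U).image cw := by
    refine (image_subset_iff.2 fun q _ ↦ ?_).antisymm (image_subset_image (subset_univ _))
    refine mem_image.2 ⟨(U.piecewise q.1 0, U.piecewise q.2 0), ?_, ?_⟩
    · simp +contextual [mem_delta]
    · simp +contextual [cw_eq_iff]
  have injOn : Set.InjOn cw (delta U ×ˢ delta U : Finset _) := by
    intro q hq q' hq' h
    simp only [coe_product, Set.mem_prod, mem_coe, mem_delta] at hq hq'
    rw [cw_eq_iff] at h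
    ext i <;> by_cases hi : i ∈ U <;> simp [*]
  rw [image_eq, card_image_of_injOn injOn, card_product, card_delta, ← mul_pow]
  norm_num

end SubfieldCode

theorem components_of_card_eq_four {E : Type} [Field E] [Fintype E] (hE : Fintype.card E = 4)
    {w : E} {π₁ π₂ : E → ZMod 2} (hπ : ∀ g : E, g = e2 (π₁ g) + w * e2 (π₂ g)) (x y : ZMod 2) :
    π₁ (e2 x + w * e2 y) = x ∧ π₂ (e2 x + w * e2 y) = y := by
  have injective : Function.Injective fun g ↦ (π₁ g, π₂ g) := fun g g' h ↦ by
    obtain ⟨h₁, h₂⟩ := Prod.mk.inj h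
    rw [hπ g, hπ g', h₁, h₂]
  have bijective : Function.Bijective fun g ↦ (π₁ g, π₂ g) :=
    (Fintype.bijective_iff_injective_and_card _).2 ⟨injective, by simp [hE]⟩
  obtain ⟨g, hg⟩ := bijective.surjective (x, y)
  obtain ⟨rfl, rfl⟩ := Prod.mk.inj hg
  rw [← hπ g]
  exact ⟨rfl, rfl⟩

theorem binary_subfield_two_maximal_elements_general {K : Type} [Field K] [DecidableEq K]
    {m : ℕ} (w : K) (π₁ π₂ : K → ZMod 2)
    (hπ : ∀ x y, π₁ (e2 x + w * e2 y) = x ∧ π₂ (e2 x + w * e2 y) = y)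
    (A B : Finset (Fin m)) (a b c s t u : ℕ) (ha : a = A.card) (hb : b = B.card)
    (hc : c = (A ∩ B).card) (hs : s = (A \ B).card) (ht : t = (B \ A).card)
    (hu : u = (A ∪ B).card) (N : ℚ) (hN : N = 2 ^ a + 2 ^ b - 2 ^ c) :
    ((((delta A ∪ delta B) ×ˢ (delta A ∪ delta B)).image (dvec w)).erase 0).card
      = (2 ^ a + 2 ^ b - 2 ^ c) ^ 2 - 1
    ∧ (Finset.univ.image
        (fun ab : (Fin m → ZMod 2) × (Fin m → ZMod 2) =>
          cw2F ((((delta A ∪ delta B) ×ˢ (delta A ∪ delta B)).image (dvec w)).erase 0)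
            π₁ π₂ ab.1 ab.2)).card
      = 4 ^ u
    ∧ (Finset.univ.val.map
        (fun ab : (Fin m → ZMod 2) × (Fin m → ZMod 2) =>
          (wt2F ((((delta A ∪ delta B) ×ˢ (delta A ∪ delta B)).image (dvec w)).erase 0)
            π₁ π₂ ab.1 ab.2 : ℚ)))
      = Multiset.replicate (4 ^ (m - u)) 0
        + Multiset.replicate (2 * (2 ^ s - 1) * 4 ^ (m - u)) (2 ^ (a - 1) * N)
        + Multiset.replicate (2 * (2 ^ t - 1) * 4 ^ (m - u)) (2 ^ (b - 1) * N)
        + Multiset.replicate (2 * (2 ^ s - 1) * (2 ^ t - 1) * 4 ^ (m - u))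
            ((2 ^ (a - 1) + 2 ^ (b - 1)) * N)
        + Multiset.replicate ((2 ^ t - 1) ^ 2 * 4 ^ (m - u))
            (2 ^ (b - 1) * (2 ^ (a + 1) + 2 ^ b - 2 ^ (c + 1)))
        + Multiset.replicate ((2 ^ s - 1) ^ 2 * 4 ^ (m - u))
            (2 ^ (a - 1) * (2 ^ a + 2 ^ (b + 1) - 2 ^ (c + 1)))
        + Multiset.replicate ((2 ^ s - 1) ^ 2 * (2 ^ t - 1) ^ 2 * 4 ^ (m - u))
            ((2 ^ (a - 1) + 2 ^ (b - 1)) * (2 ^ a + 2 ^ b - 2 ^ (c + 1)))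
        + Multiset.replicate (2 * (2 ^ s - 1) * (2 ^ t - 1) * 4 ^ (m - u))
            (1 / 2 * N ^ 2 - 1 / 2 * (2 ^ a - 2 ^ c) * (2 ^ b - 2 ^ c))
        + Multiset.replicate (2 * (2 ^ s - 1) * (2 ^ t - 1) ^ 2 * 4 ^ (m - u))
            (1 / 2 * N ^ 2 + 1 / 2 * 2 ^ c * (2 ^ a - 2 ^ c))
        + Multiset.replicate (2 * (2 ^ s - 1) ^ 2 * (2 ^ t - 1) * 4 ^ (m - u))
            (1 / 2 * N ^ 2 + 1 / 2 * 2 ^ c * (2 ^ b - 2 ^ c))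
        + Multiset.replicate ((4 ^ u - 4 ^ (s + t)) * 4 ^ (m - u)) (1 / 2 * N ^ 2) := by
  have h0 : 0 ∈ delta A ∪ delta B := mem_union_left _ (zero_mem_delta A)
  have card_Δ : #(delta A ∪ delta B) = 2 ^ a + 2 ^ b - 2 ^ c := by
    rw [ha, hb, hc, ← card_delta_union_add, Nat.add_sub_cancel]
  have cast_card_Δ : (#(delta A ∪ delta B) : ℚ) = N := by
    rw [cast_card_delta_union, hN, ha, hb, hc]
  refine ⟨by rw [← card_Δ]; exact card_puncturedSet hπ h0, ?_, ?_⟩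
  · rw [hu]
    exact card_image_cw2F_puncturedSet hπ (delta_union_subset A B) h0 fun i hi ↦
      mem_union.2 ((mem_union.1 hi).imp single_mem_delta single_mem_delta)
  refine multiset_eq_of_forall_sum_map fun f : ℚ → ℚ ↦ ?_
  rw [Multiset.map_map]
  refine (sum_comp_wt2F_puncturedSet hπ _ f).trans ((sum_comp_charSum_mul_charSum_delta_union A B
    fun z ↦ f (1 / 2 * (#(delta A ∪ delta B) ^ 2 - z))).trans ?_)
  have hs_le : s ≤ a := hs ▸ ha ▸ card_le_card sdiff_subset
  have ht_le : t ≤ b := ht ▸ hb ▸ card_le_card sdiff_subset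
  have hst_le : s + t ≤ u := hs ▸ ht ▸ hu ▸ card_sdiff_add_card_sdiff_le_card_union A B
  simp only [cast_card_Δ, ← ha, ← hb, ← hc, ← hs, ← ht, ← hu, Multiset.map_add, Multiset.sum_add,
    Multiset.map_replicate, Multiset.sum_replicate, nsmul_eq_mul, Nat.cast_mul, Nat.cast_pow,
    Nat.cast_ofNat, Nat.cast_one, Nat.cast_sub Nat.one_le_two_pow,
    Nat.cast_sub (Nat.pow_le_pow_right four_pos hst_le)]
  rw [hN]
  -- If `s = 0` the exponent `a - 1` may truncate, but all weights containing it have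
  -- multiplicity zero; likewise for `t` and `b`.
  rcases s.eq_zero_or_pos with rfl | hs_pos <;> rcases t.eq_zero_or_pos with rfl | ht_pos
  · ring_nf
  · rw [two_pow_pred (ht_pos.trans_le ht_le)]
    ring_nf
  · rw [two_pow_pred (hs_pos.trans_le hs_le)]
    ring_nf
  · rw [two_pow_pred (hs_pos.trans_le hs_le), two_pow_pred (ht_pos.trans_le ht_le)]
    ring_nf

/-- Proposition 5.3: weight distribution of the binary subfield code `C^{(2)}_{D^*}` for
`D = Δ + wΔ`, where `Δ = Δ_A ∪ Δ_B` with `A ⊄ B` and `B ⊄ A`. -/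
theorem binary_subfield_two_maximal_elements {m : ℕ} (hm : 1 ≤ m)
    (hF : Fintype.card F = 4) (w : F) (hw : w ^ 2 + w + 1 = 0)
    (π₁ π₂ : F → ZMod 2) (hπ : ∀ g : F, g = e2 (π₁ g) + w * e2 (π₂ g))
    (A B : Finset (Fin m)) (hA : ¬ A ⊆ B) (hB : ¬ B ⊆ A)
    (a b c s t u : ℕ) (ha : a = A.card) (hb : b = B.card) (hc : c = (A ∩ B).card)
    (hs : s = (A \ B).card) (ht : t = (B \ A).card) (hu : u = (A ∪ B).card)
    (N : ℚ) (hN : N = 2 ^ a + 2 ^ b - 2 ^ c) :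
    ((((delta A ∪ delta B) ×ˢ (delta A ∪ delta B)).image (dvec w)).erase 0).card
      = (2 ^ a + 2 ^ b - 2 ^ c) ^ 2 - 1
    ∧ (Finset.univ.image
        (fun ab : (Fin m → ZMod 2) × (Fin m → ZMod 2) =>
          cw2F ((((delta A ∪ delta B) ×ˢ (delta A ∪ delta B)).image (dvec w)).erase 0)
            π₁ π₂ ab.1 ab.2)).card
      = 4 ^ u
    ∧ (Finset.univ.val.map
        (fun ab : (Fin m → ZMod 2) × (Fin m → ZMod 2) =>
          (wt2F ((((delta A ∪ delta B) ×ˢ (delta A ∪ delta B)).image (dvec w)).erase 0)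
            π₁ π₂ ab.1 ab.2 : ℚ)))
      = Multiset.replicate (4 ^ (m - u)) 0
        + Multiset.replicate (2 * (2 ^ s - 1) * 4 ^ (m - u)) (2 ^ (a - 1) * N)
        + Multiset.replicate (2 * (2 ^ t - 1) * 4 ^ (m - u)) (2 ^ (b - 1) * N)
        + Multiset.replicate (2 * (2 ^ s - 1) * (2 ^ t - 1) * 4 ^ (m - u))
            ((2 ^ (a - 1) + 2 ^ (b - 1)) * N)
        + Multiset.replicate ((2 ^ t - 1) ^ 2 * 4 ^ (m - u))
            (2 ^ (b - 1) * (2 ^ (a + 1) + 2 ^ b - 2 ^ (c + 1)))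
        + Multiset.replicate ((2 ^ s - 1) ^ 2 * 4 ^ (m - u))
            (2 ^ (a - 1) * (2 ^ a + 2 ^ (b + 1) - 2 ^ (c + 1)))
        + Multiset.replicate ((2 ^ s - 1) ^ 2 * (2 ^ t - 1) ^ 2 * 4 ^ (m - u))
            ((2 ^ (a - 1) + 2 ^ (b - 1)) * (2 ^ a + 2 ^ b - 2 ^ (c + 1)))
        + Multiset.replicate (2 * (2 ^ s - 1) * (2 ^ t - 1) * 4 ^ (m - u))
            (1 / 2 * N ^ 2 - 1 / 2 * (2 ^ a - 2 ^ c) * (2 ^ b - 2 ^ c))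
        + Multiset.replicate (2 * (2 ^ s - 1) * (2 ^ t - 1) ^ 2 * 4 ^ (m - u))
            (1 / 2 * N ^ 2 + 1 / 2 * 2 ^ c * (2 ^ a - 2 ^ c))
        + Multiset.replicate (2 * (2 ^ s - 1) ^ 2 * (2 ^ t - 1) * 4 ^ (m - u))
            (1 / 2 * N ^ 2 + 1 / 2 * 2 ^ c * (2 ^ b - 2 ^ c))
        + Multiset.replicate ((4 ^ u - 4 ^ (s + t)) * 4 ^ (m - u)) (1 / 2 * N ^ 2) :=
  binary_subfield_two_maximal_elements_general w π₁ π₂ (components_of_card_eq_four hF hπ)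
    A B a b c s t u ha hb hc hs ht hu N hN
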